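/- Every connected weighted graph G on n vertices and every set 𝒫 ⊆ V × V of vertex pairs admits a subgraph H of G with at most C·n·|𝒫|^{2/7} edges (for a universal constant C) such that d_H(s,t) ≤ d_G(s,t) + 4·W(s,t) for every pair (s,t) ∈ 𝒫. -/

import Mathlib

open scoped ENNReal Classical

/-- The total weight of a walk: the sum of the weights of its edges. -/
noncomputable def walkWeight {V : Type} (G : SimpleGraph V) (w : Sym2 V → ℝ≥0∞)
    {s t : V} (p : G.Walk s t) : ℝ≥0∞ :=
  (p.edges.map w).sum

/-- Shortest-path distance in the weighted graph `(G, w)`, equal to `⊤` if there is no path. -/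
noncomputable def gdist {V : Type} (G : SimpleGraph V) (w : Sym2 V → ℝ≥0∞)
    (s t : V) : ℝ≥0∞ :=
  ⨅ p : G.Walk s t, walkWeight G w p

/-- The maximum edge weight along a walk (0 for the trivial walk). -/
noncomputable def maxEdge {V : Type} (G : SimpleGraph V) (w : Sym2 V → ℝ≥0∞)
    {s t : V} (p : G.Walk s t) : ℝ≥0∞ :=
  (p.edges.map w).foldr max 0

/-- `π` assigns to each ordered vertex pair a shortest path: a walk whose total
weight equals the shortest-path distance. -/
def IsShortestPathScheme {V : Type} (G : SimpleGraph V) (w : Sym2 V → ℝ≥0∞)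
    (π : (s t : V) → G.Walk s t) : Prop :=
  ∀ s t : V, walkWeight G w (π s t) = gdist G w s t

/-- The edge weights are positive and finite on all edges of `G`. -/
def PosWeights {V : Type} (G : SimpleGraph V) (w : Sym2 V → ℝ≥0∞) : Prop :=
  ∀ e ∈ G.edgeSet, 0 < w e ∧ w e ≠ ⊤

/-!
Fix `y = |𝒫|^(1/7)`. Start from the graph `H` in which every vertex keeps its `d ≈ y²` lightest
edges. If a shortest path misses `k` edges of `H`, then about `d * k` vertices hang off the path by
edges of `H` no heavier than `W`: a vertex can hang off only boundedly many places, since otherwise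
it would give a shortcut. Depending on how many edges the path of a pair misses, the pair
is completed with few edges, or it has so many nearby vertices that `O(y²)` shortest-path trees
provide a detour for most such pairs, or both ends of its path, once their first few missing edges
are added, have so many nearby vertices that a hitting set of size `O(y³)` meets most of them; then
one cheap completion for every two hitting vertices suffices, because the completion which is best
between two vertices serves all pairs that reach both of them. Each round uses `O(n y²)` edges and
serves a constant fraction of the pairs, so the rounds sum to a geometric series.
-/

section Distance

variable {V : Type} {G H : SimpleGraph V} {w : Sym2 V → ℝ≥0∞}

lemma gdist_le_walkWeight {s t : V} (p : G.Walk s t) : gdist G w s t ≤ walkWeight G w p :=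
  iInf_le _ p

lemma gdist_self (s : V) : gdist G w s s = 0 := by
  simpa [walkWeight] using gdist_le_walkWeight (w := w) (SimpleGraph.Walk.nil : G.Walk s s)

lemma gdist_le_of_adj {s t : V} (h : G.Adj s t) : gdist G w s t ≤ w s(s, t) := by
  simpa [walkWeight] using gdist_le_walkWeight (w := w) h.toWalk

lemma gdist_triangle (s x t : V) : gdist G w s t ≤ gdist G w s x + gdist G w x t := by
  refine ENNReal.le_iInf_add_iInf fun p q => (gdist_le_walkWeight (p.append q)).trans_eq ?_
  simp [walkWeight, SimpleGraph.Walk.edges_append]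

lemma gdist_comm (s t : V) : gdist G w s t = gdist G w t s := by
  have reverse_le (u v : V) : gdist G w u v ≤ gdist G w v u :=
    le_iInf fun p => (gdist_le_walkWeight p.reverse).trans_eq (by simp [walkWeight])
  exact (reverse_le s t).antisymm (reverse_le t s)

lemma gdist_anti (h : G ≤ H) (s t : V) : gdist H w s t ≤ gdist G w s t :=
  le_iInf fun p => (gdist_le_walkWeight (p.mapLe h)).trans_eq (by simp [walkWeight])

end Distance

section EdgeCount

variable {V : Type}

lemma ncard_edgeSet_fromEdgeSet_le (E : Finset (Sym2 V)) :
    (SimpleGraph.fromEdgeSet (E : Set (Sym2 V))).edgeSet.ncard ≤ E.card := by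
  rw [SimpleGraph.edgeSet_fromEdgeSet, ← Set.ncard_coe_finset]
  exact Set.ncard_le_ncard Set.sdiff_subset E.finite_toSet

lemma ncard_edgeSet_sup_le (G H : SimpleGraph V) :
    (G ⊔ H).edgeSet.ncard ≤ G.edgeSet.ncard + H.edgeSet.ncard := by
  rw [SimpleGraph.edgeSet_sup]
  exact Set.ncard_union_le _ _

lemma ncard_edgeSet_finset_sup_le {ι : Type*} (I : Finset ι) (H : ι → SimpleGraph V) {m : ℕ}
    (hH : ∀ i ∈ I, (H i).edgeSet.ncard ≤ m) : (I.sup H).edgeSet.ncard ≤ I.card * m := by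
  induction I using Finset.induction_on with
  | empty => simp
  | insert i I hi ih =>
    rw [Finset.sup_insert, Finset.card_insert_of_notMem hi, add_mul, one_mul, add_comm]
    refine (ncard_edgeSet_sup_le _ _).trans (add_le_add ?_ (ih fun j hj => ?_))
    · exact hH i (Finset.mem_insert_self i I)
    · exact hH j (Finset.mem_insert_of_mem hj)

end EdgeCount

section Steps

variable {V : Type} {G H H' : SimpleGraph V} {w : Sym2 V → ℝ≥0∞} {s t : V} {p : G.Walk s t}

/-- The `k`-th edge of a walk, counted from `0`; a loop at the endpoint for `k ≥ p.length`. -/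
def stepEdge (p : G.Walk s t) (k : ℕ) : Sym2 V :=
  s(p.getVert k, p.getVert (k + 1))

/-- The weight of the part of a walk between its `i`-th and its `j`-th vertex. -/
noncomputable def segWeight (w : Sym2 V → ℝ≥0∞) (p : G.Walk s t) (i j : ℕ) : ℝ≥0∞ :=
  ∑ k ∈ Finset.Ico i j, w (stepEdge p k)

/-- The graph `H` contains all edges of the walk between its `i`-th and its `j`-th vertex. -/
def CoversSegment (H : SimpleGraph V) (p : G.Walk s t) (i j : ℕ) : Prop :=
  ∀ k ∈ Finset.Ico i j, stepEdge p k ∈ H.edgeSet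

lemma stepEdge_mem_edgeSet {k : ℕ} (hk : k < p.length) : stepEdge p k ∈ G.edgeSet :=
  p.adj_getVert_succ hk

lemma stepEdge_mem_edges {k : ℕ} (hk : k < p.length) : stepEdge p k ∈ p.edges :=
  p.mk_mem_edges_iff_exists.2 ⟨k, hk, rfl⟩

lemma stepEdge_reverse {k : ℕ} (hk : k < p.length) :
    stepEdge p.reverse k = stepEdge p (p.length - 1 - k) := by
  rw [stepEdge, stepEdge, SimpleGraph.Walk.getVert_reverse, SimpleGraph.Walk.getVert_reverse,
    Sym2.eq_swap, show p.length - (k + 1) = p.length - 1 - k by omega,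
    show p.length - k = p.length - 1 - k + 1 by omega]

lemma segWeight_add {i j k : ℕ} (hij : i ≤ j) (hjk : j ≤ k) :
    segWeight w p i j + segWeight w p j k = segWeight w p i k :=
  Finset.sum_Ico_consecutive _ hij hjk

lemma walkWeight_eq_segWeight (p : G.Walk s t) :
    walkWeight G w p = segWeight w p 0 p.length := by
  rw [segWeight, ← Finset.range_eq_Ico]
  induction p with
  | nil => simp [walkWeight]
  | cons h p ih =>
    rw [SimpleGraph.Walk.length_cons, Finset.sum_range_succ', add_comm]
    simpa [walkWeight, stepEdge] using congrArg (w s(_, _) + ·) ih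

lemma segWeight_reverse {i j : ℕ} (hj : j ≤ p.length) :
    segWeight w p.reverse i j = segWeight w p (p.length - j) (p.length - i) := by
  rcases p.length.eq_zero_or_pos with h0 | hpos
  · simp [segWeight, show j = 0 by omega, h0]
  calc segWeight w p.reverse i j
      = ∑ k ∈ Finset.Ico i j, w (stepEdge p (p.length - 1 - k)) :=
        Finset.sum_congr rfl fun k hk => by
          rw [stepEdge_reverse ((Finset.mem_Ico.1 hk).2.trans_le hj)]
    _ = segWeight w p (p.length - j) (p.length - i) := by
        rw [Finset.sum_Ico_reflect (fun k => w (stepEdge p k)) i (by omega),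
          Nat.sub_add_cancel hpos, segWeight]

lemma weight_le_maxEdge {e : Sym2 V} (he : e ∈ p.edges) : w e ≤ maxEdge G w p :=
  List.le_max_of_le' 0 (List.mem_map_of_mem he) le_rfl

lemma maxEdge_reverse (p : G.Walk s t) : maxEdge G w p.reverse = maxEdge G w p := by
  rw [maxEdge, maxEdge, SimpleGraph.Walk.edges_reverse, List.map_reverse]
  exact (List.reverse_perm _).foldr_eq 0

lemma CoversSegment.mono {i j : ℕ} (h : CoversSegment H p i j) (hH : H ≤ H') :
    CoversSegment H' p i j :=
  fun k hk => SimpleGraph.edgeSet_mono hH (h k hk)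

lemma CoversSegment.subset {i j i' j' : ℕ} (h : CoversSegment H p i j) (hi : i ≤ i')
    (hj : j' ≤ j) : CoversSegment H p i' j' :=
  fun k hk => h k (Finset.Ico_subset_Ico hi hj hk)

lemma CoversSegment.trans {i j i' j' : ℕ} (h : CoversSegment H p i j)
    (h' : CoversSegment H p i' j') (hij : i' ≤ j) : CoversSegment H p i j' := by
  intro k hk
  obtain ⟨hik, hkj⟩ := Finset.mem_Ico.1 hk
  by_cases hkj' : k < j
  · exact h k (Finset.mem_Ico.2 ⟨hik, hkj'⟩)
  · exact h' k (Finset.mem_Ico.2 ⟨by omega, hkj⟩)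

lemma CoversSegment.of_reverse {b : ℕ} (h : CoversSegment H p.reverse 0 b) :
    CoversSegment H p (p.length - b) p.length := by
  intro k hk
  obtain ⟨hbk, hk⟩ := Finset.mem_Ico.1 hk
  have hmem := h (p.length - 1 - k) (Finset.mem_Ico.2 ⟨Nat.zero_le _, by omega⟩)
  rwa [stepEdge_reverse (by omega), show p.length - 1 - (p.length - 1 - k) = k by omega] at hmem

lemma coversSegment_self {i j : ℕ} (hj : j ≤ p.length) : CoversSegment G p i j :=
  fun _ hk => stepEdge_mem_edgeSet ((Finset.mem_Ico.1 hk).2.trans_le hj)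

lemma CoversSegment.gdist_le {i j : ℕ} (h : CoversSegment H p i j) (hij : i ≤ j) :
    gdist H w (p.getVert i) (p.getVert j) ≤ segWeight w p i j := by
  induction j, hij using Nat.le_induction with
  | base => simp [gdist_self]
  | succ j hij ih =>
    have hadj : H.Adj (p.getVert j) (p.getVert (j + 1)) :=
      h j (Finset.mem_Ico.2 ⟨hij, j.lt_succ_self⟩)
    rw [segWeight, Finset.sum_Ico_succ_top hij]
    exact (gdist_triangle _ (p.getVert j) _).trans <|
      add_le_add (ih (h.subset le_rfl j.le_succ)) (gdist_le_of_adj hadj)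

end Steps

section Geodesic

variable {V : Type} {G : SimpleGraph V} {w : Sym2 V → ℝ≥0∞} {s t : V} {p : G.Walk s t}

/-- A shortest path with respect to the edge weights `w`. -/
def IsGeodesic (w : Sym2 V → ℝ≥0∞) (p : G.Walk s t) : Prop :=
  walkWeight G w p = gdist G w s t

lemma IsGeodesic.segWeight_eq_gdist (hp : IsGeodesic w p) :
    segWeight w p 0 p.length = gdist G w s t :=
  (walkWeight_eq_segWeight p).symm.trans hp

lemma IsGeodesic.reverse (hp : IsGeodesic w p) : IsGeodesic w p.reverse := by
  rw [IsGeodesic, gdist_comm, ← hp]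
  simp [walkWeight]

lemma segWeight_ne_top (hw : PosWeights G w) {i j : ℕ} (hj : j ≤ p.length) :
    segWeight w p i j ≠ ⊤ :=
  ENNReal.sum_ne_top.2 fun _ hk =>
    (hw _ (stepEdge_mem_edgeSet ((Finset.mem_Ico.1 hk).2.trans_le hj))).2

lemma IsGeodesic.segWeight_le_gdist (hw : PosWeights G w) (hp : IsGeodesic w p) {i j : ℕ}
    (hij : i ≤ j) (hj : j ≤ p.length) :
    segWeight w p i j ≤ gdist G w (p.getVert i) (p.getVert j) := by
  have hprefix : gdist G w s (p.getVert i) ≤ segWeight w p 0 i := by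
    simpa using (coversSegment_self (hij.trans hj)).gdist_le (p := p) (w := w) i.zero_le
  have hsuffix : gdist G w (p.getVert j) t ≤ segWeight w p j p.length := by
    simpa using (coversSegment_self le_rfl).gdist_le (p := p) (w := w) hj
  have hsum : segWeight w p 0 i + (segWeight w p i j + segWeight w p j p.length) ≤
      segWeight w p 0 i + (gdist G w (p.getVert i) (p.getVert j) + segWeight w p j p.length) := by
    rw [segWeight_add hij hj, segWeight_add i.zero_le (hij.trans hj), hp.segWeight_eq_gdist]
    calc gdist G w s t
        ≤ gdist G w s (p.getVert i) + (gdist G w (p.getVert i) (p.getVert j) +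
            gdist G w (p.getVert j) t) :=
          (gdist_triangle _ _ _).trans (add_le_add_right (gdist_triangle _ _ _) _)
      _ ≤ _ := by gcongr
  have hcancel := (ENNReal.add_le_add_iff_left (segWeight_ne_top hw (hij.trans hj))).1 hsum
  exact (ENNReal.add_le_add_iff_right (segWeight_ne_top hw le_rfl)).1 hcancel

lemma IsGeodesic.add_lt_gdist (hw : PosWeights G w) (hp : IsGeodesic w p) {i j a b c : ℕ}
    (hia : i ≤ a) (hab : a < b) (hbc : b < c) (hcj : c < j) (hj : j ≤ p.length) :
    w (stepEdge p a) + w (stepEdge p c) < gdist G w (p.getVert i) (p.getVert j) := by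
  have hpos (k : ℕ) (hk : k < j) := hw _ (stepEdge_mem_edgeSet (hk.trans_le hj))
  have hsub : ({a, b, c} : Finset ℕ) ⊆ Finset.Ico i j := by
    intro k hk
    simp only [Finset.mem_insert, Finset.mem_singleton] at hk
    rw [Finset.mem_Ico]
    omega
  calc w (stepEdge p a) + w (stepEdge p c)
      < w (stepEdge p a) + w (stepEdge p c) + w (stepEdge p b) :=
        ENNReal.lt_add_right
          (ENNReal.add_ne_top.2 ⟨(hpos a (by omega)).2, (hpos c hcj).2⟩) (hpos b (by omega)).1.ne'
    _ = ∑ k ∈ ({a, b, c} : Finset ℕ), w (stepEdge p k) := by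
        rw [Finset.sum_insert (by simp; omega), Finset.sum_pair hbc.ne]
        ring
    _ ≤ segWeight w p i j := Finset.sum_le_sum_of_subset hsub
    _ ≤ _ := hp.segWeight_le_gdist hw (by omega) hj

end Geodesic

section LightInitialization

variable {V : Type} {G H : SimpleGraph V} {w : Sym2 V → ℝ≥0∞} {d : ℕ} {s t : V} {p : G.Walk s t}

lemma exists_lightest_subset {α β : Type*} [LinearOrder β] (S : Finset α) (f : α → β) (d : ℕ) :
    ∃ T ⊆ S, T.card ≤ d ∧ ∀ v ∈ S \ T, d ≤ T.card ∧ ∀ x ∈ T, f x ≤ f v := by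
  induction d with
  | zero => exact ⟨∅, by simp⟩
  | succ d ih =>
    obtain ⟨T, hTS, hTd, hT⟩ := ih
    rcases (S \ T).eq_empty_or_nonempty with hST | hST
    · exact ⟨T, hTS, by omega, by simp [hST]⟩
    obtain ⟨m, hm, hmin⟩ := Finset.exists_min_image (S \ T) f hST
    obtain ⟨hmS, hmT⟩ := Finset.mem_sdiff.1 hm
    have hcard := Finset.card_insert_of_notMem hmT
    refine ⟨insert m T, Finset.insert_subset hmS hTS, by omega, fun v hv => ?_⟩
    have hv' : v ∈ S \ T := Finset.sdiff_subset_sdiff le_rfl (Finset.subset_insert m T) hv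
    exact ⟨by have := (hT v hv').1; omega,
      Finset.forall_mem_insert _ _ _ |>.2 ⟨hmin v hv', (hT v hv').2⟩⟩

/-- A light initialization: if `H` misses an edge of `G` at `u`, then `H` has `d` neighbours of
`u` along edges which are no heavier than the missing one. -/
def IsLightInit (G H : SimpleGraph V) (w : Sym2 V → ℝ≥0∞) (d : ℕ) : Prop :=
  ∀ ⦃u v⦄, G.Adj u v → ¬ H.Adj u v →
    ∃ N : Finset V, d ≤ N.card ∧ ∀ x ∈ N, H.Adj u x ∧ w s(u, x) ≤ w s(u, v)

lemma exists_isLightInit [Fintype V] (G : SimpleGraph V) (w : Sym2 V → ℝ≥0∞) (d : ℕ) :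
    ∃ H ≤ G, H.edgeSet.ncard ≤ Fintype.card V * d ∧ IsLightInit G H w d := by
  choose N hNG hNd hN using
    fun u : V => exists_lightest_subset (G.neighborFinset u) (fun x => w s(u, x)) d
  let E : Finset (Sym2 V) := Finset.univ.biUnion fun u => (N u).image fun x => s(u, x)
  have hE {u x : V} (hx : x ∈ N u) : s(u, x) ∈ E :=
    Finset.mem_biUnion.2 ⟨u, Finset.mem_univ u, Finset.mem_image_of_mem _ hx⟩
  have hadj {u x : V} (hx : x ∈ N u) : G.Adj u x := (G.mem_neighborFinset u x).1 (hNG u hx)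
  refine ⟨SimpleGraph.fromEdgeSet E, ?_, (ncard_edgeSet_fromEdgeSet_le E).trans ?_, ?_⟩
  · rw [SimpleGraph.fromEdgeSet_le]
    rintro e ⟨he, -⟩
    simp only [E, Finset.coe_biUnion, Finset.coe_image, Set.mem_iUnion, Set.mem_image] at he
    obtain ⟨u, -, x, hx, rfl⟩ := he
    exact hadj hx
  · exact Finset.card_biUnion_le_card_mul _ _ d fun u _ => Finset.card_image_le.trans (hNd u)
  · intro u v huv hmiss
    have hv : v ∈ G.neighborFinset u \ N u :=
      Finset.mem_sdiff.2 ⟨(G.mem_neighborFinset u v).2 huv, fun hv => hmiss ⟨hE hv, huv.ne⟩⟩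
    exact ⟨N u, (hN u v hv).1, fun x hx => ⟨⟨hE hx, (hadj hx).ne⟩, (hN u v hv).2 x hx⟩⟩

/-- The positions `k < n` at which the walk uses an edge that is not in `H`. -/
noncomputable def missing (H : SimpleGraph V) (p : G.Walk s t) (n : ℕ) : Finset ℕ :=
  (Finset.range n).filter fun k => stepEdge p k ∉ H.edgeSet

/-- The vertices that hang off one of the first `n` vertices of the walk by an edge of `H` which is
no heavier than the heaviest edge of the walk. -/
noncomputable def pathNbhd [Fintype V] (H : SimpleGraph V) (w : Sym2 V → ℝ≥0∞) (p : G.Walk s t)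
    (n : ℕ) : Finset V :=
  Finset.univ.filter fun x =>
    ∃ g < n, H.Adj (p.getVert g) x ∧ w s(p.getVert g, x) ≤ maxEdge G w p

lemma mem_missing {n k : ℕ} : k ∈ missing H p n ↔ k < n ∧ stepEdge p k ∉ H.edgeSet := by
  simp [missing]

lemma mem_pathNbhd [Fintype V] {n : ℕ} {x : V} :
    x ∈ pathNbhd H w p n ↔
      ∃ g < n, H.Adj (p.getVert g) x ∧ w s(p.getVert g, x) ≤ maxEdge G w p := by
  simp [pathNbhd]

/-- Of the missing edge `k` and the preceding missing edge `r`, the lighter one supplies the star,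
at the endpoint which lies between the two edges; so its edges are light compared with both. -/
lemma IsLightInit.exists_star (hH : IsLightInit G H w d) {k : ℕ} (hkp : k < p.length)
    (hk : stepEdge p k ∉ H.edgeSet) :
    ∃ g ≤ k, ∃ N : Finset V, d ≤ N.card ∧
      (∀ x ∈ N, H.Adj (p.getVert g) x ∧ w s(p.getVert g, x) ≤ w (stepEdge p k)) ∧
      ∀ r, IsGreatest {r | r < k ∧ stepEdge p r ∉ H.edgeSet} r →
        r < g ∧ ∀ x ∈ N, w s(p.getVert g, x) ≤ w (stepEdge p r) := by
  by_cases hlight : ∃ r, IsGreatest {r | r < k ∧ stepEdge p r ∉ H.edgeSet} r ∧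
      w (stepEdge p r) < w (stepEdge p k)
  · obtain ⟨r, hr, hrk⟩ := hlight
    obtain ⟨N, hdN, hN⟩ := hH (p.adj_getVert_succ (hr.1.1.trans hkp)).symm
      fun hadj => hr.1.2 hadj.symm
    rw [Sym2.eq_swap (a := p.getVert (r + 1)) (b := p.getVert r)] at hN
    refine ⟨r + 1, hr.1.1, N, hdN, fun x hx => ⟨(hN x hx).1, (hN x hx).2.trans hrk.le⟩, ?_⟩
    rintro r' hr'
    obtain rfl := hr'.unique hr
    exact ⟨r'.lt_succ_self, fun x hx => (hN x hx).2⟩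
  · obtain ⟨N, hdN, hN⟩ := hH (p.adj_getVert_succ hkp) hk
    exact ⟨k, le_rfl, N, hdN, hN, fun r hr => ⟨hr.1.1, fun x hx =>
      (hN x hx).2.trans (not_lt.1 fun hlt => hlight ⟨r, hr, hlt⟩)⟩⟩

lemma exists_lt_lt_lt_of_three_lt_card {α : Type*} [LinearOrder α] {S : Finset α}
    (hS : 3 < S.card) :
    ∃ a ∈ S, ∃ b ∈ S, ∃ c ∈ S, ∃ e ∈ S, a < b ∧ b < c ∧ c < e := by
  let f := S.orderEmbOfFin rfl
  have hmem (i : Fin S.card) : f i ∈ S := S.orderEmbOfFin_mem rfl i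
  exact ⟨f ⟨0, by omega⟩, hmem _, f ⟨1, by omega⟩, hmem _, f ⟨2, by omega⟩, hmem _,
    f ⟨3, hS⟩, hmem _, f.lt_iff_lt.2 (by simp), f.lt_iff_lt.2 (by simp), f.lt_iff_lt.2 (by simp)⟩

/-- A vertex in four of the stars would shortcut the geodesic from the first of these stars to the
last one. -/
lemma IsGeodesic.card_missing_mul_le [Fintype V] (hw : PosWeights G w) (hHG : H ≤ G)
    (hH : IsLightInit G H w d) (hp : IsGeodesic w p) {n : ℕ} (hn : n ≤ p.length) :
    (missing H p n).card * d ≤ (pathNbhd H w p n).card * 3 := by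
  have hlt {k : ℕ} (hk : k ∈ missing H p n) : k < p.length := (mem_missing.1 hk).1.trans_le hn
  choose! g hgk N hdN hN hpred using
    fun k (hk : k ∈ missing H p n) => hH.exists_star (hlt hk) (mem_missing.1 hk).2
  refine Finset.card_mul_le_card_mul (fun k x => x ∈ N k) (fun k hk => ?_) fun x _ => ?_
  · refine (hdN k hk).trans (Finset.card_le_card fun x hx => ?_)
    obtain ⟨hadj, hle⟩ := hN k hk x hx
    refine (Finset.mem_bipartiteAbove _).2 ⟨mem_pathNbhd.2 ⟨g k, ?_, hadj, ?_⟩, hx⟩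
    · exact (hgk k hk).trans_lt (mem_missing.1 hk).1
    · exact hle.trans (weight_le_maxEdge (stepEdge_mem_edges (hlt hk)))
  by_contra! hfour
  obtain ⟨a, ha, b, -, c, hc, e, he, hab, hbc, hce⟩ := exists_lt_lt_lt_of_three_lt_card hfour
  obtain ⟨haM, hax⟩ := (Finset.mem_bipartiteBelow _).1 ha
  obtain ⟨heM, hex⟩ := (Finset.mem_bipartiteBelow _).1 he
  have hcM := ((Finset.mem_bipartiteBelow _).1 hc).1
  obtain ⟨r, hr⟩ := BddAbove.exists_isGreatest_of_nonempty
    (S := {r | r < e ∧ stepEdge p r ∉ H.edgeSet}) ⟨e, fun r hr => hr.1.le⟩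
    ⟨c, hce, (mem_missing.1 hcM).2⟩
  have hcr : c ≤ r := hr.2 ⟨hce, (mem_missing.1 hcM).2⟩
  obtain ⟨hrg, hre⟩ := hpred e heM r hr
  have hlong := hp.add_lt_gdist hw (hgk a haM) hab (hbc.trans_le hcr) hrg
    ((hgk e heM).trans (hlt heM).le)
  refine hlong.not_ge ((gdist_triangle _ x _).trans (add_le_add ?_ ?_))
  · exact (gdist_le_of_adj (hHG (hN a haM x hax).1)).trans (hN a haM x hax).2
  · rw [gdist_comm]
    exact (gdist_le_of_adj (hHG (hN e heM x hex).1)).trans (hre x hex)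

end LightInitialization

section Completion

variable {V : Type} {G H B : SimpleGraph V} {w : Sym2 V → ℝ≥0∞} {d : ℕ} {s t : V}
  {p : G.Walk s t} {D : ℝ≥0∞}

lemma exists_coversSegment_sup (H : SimpleGraph V) {n : ℕ} (hn : n ≤ p.length) :
    ∃ F ≤ G, F.edgeSet.ncard ≤ (missing H p n).card ∧ CoversSegment (H ⊔ F) p 0 n := by
  let E : Finset (Sym2 V) := (missing H p n).image (stepEdge p)
  refine ⟨SimpleGraph.fromEdgeSet E, ?_,
    (ncard_edgeSet_fromEdgeSet_le E).trans Finset.card_image_le, fun k hk => ?_⟩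
  · rw [SimpleGraph.fromEdgeSet_le]
    rintro e ⟨he, -⟩
    obtain ⟨k, hk, rfl⟩ := Finset.mem_image.1 he
    exact stepEdge_mem_edgeSet ((mem_missing.1 hk).1.trans_le hn)
  · have hkn := (Finset.mem_Ico.1 hk).2
    by_cases hkH : stepEdge p k ∈ H.edgeSet
    · exact SimpleGraph.edgeSet_mono le_sup_left hkH
    · have hkE : stepEdge p k ∈ E := Finset.mem_image_of_mem _ (mem_missing.2 ⟨hkn, hkH⟩)
      exact Or.inr ⟨hkE, (p.adj_getVert_succ (hkn.trans_le hn)).ne⟩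

lemma IsGeodesic.exists_prefix_completion [Fintype V] (hw : PosWeights G w) (hHG : H ≤ G)
    (hH : IsLightInit G H w d) (hp : IsGeodesic w p) (l : ℕ) :
    ∃ F ≤ G, F.edgeSet.ncard ≤ l ∧ ∃ a, CoversSegment (H ⊔ F) p 0 a ∧
      (a = p.length ∨ (l + 1) * d ≤ (pathNbhd H w p (a + 1)).card * 3) := by
  let a := Nat.findGreatest (fun a => (missing H p a).card ≤ l) p.length
  have hal : a ≤ p.length := Nat.findGreatest_le _
  have ha : (missing H p a).card ≤ l :=
    Nat.findGreatest_spec (P := fun a => (missing H p a).card ≤ l) (Nat.zero_le _)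
      (by simp [missing])
  obtain ⟨F, hFG, hFcard, hF⟩ := exists_coversSegment_sup H hal
  refine ⟨F, hFG, hFcard.trans ha, a, hF, or_iff_not_imp_left.2 fun hne => ?_⟩
  have hlt : l < (missing H p (a + 1)).card :=
    not_le.1 (Nat.findGreatest_is_greatest (P := fun a => (missing H p a).card ≤ l)
      a.lt_succ_self (lt_of_le_of_ne hal hne))
  exact (Nat.mul_le_mul_right d hlt).trans (hp.card_missing_mul_le hw hHG hH (by omega))

lemma exists_gdist_le_of_mem_pathNbhd [Fintype V] (hHB : H ≤ B) {a : ℕ}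
    (hB : CoversSegment B p 0 a) {x : V} (hx : x ∈ pathNbhd H w p (a + 1)) :
    ∃ g ≤ a, gdist B w (p.getVert g) x ≤ maxEdge G w p ∧
      gdist B w s x ≤ segWeight w p 0 g + maxEdge G w p := by
  obtain ⟨g, hg, hadj, hle⟩ := mem_pathNbhd.1 hx
  have hgx : gdist B w (p.getVert g) x ≤ maxEdge G w p := (gdist_le_of_adj (hHB hadj)).trans hle
  have hsg := (hB.subset le_rfl (Nat.le_of_lt_succ hg)).gdist_le (w := w) g.zero_le
  rw [SimpleGraph.Walk.getVert_zero] at hsg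
  exact ⟨g, Nat.le_of_lt_succ hg, hgx, (gdist_triangle _ _ _).trans (add_le_add hsg hgx)⟩

/-- The vertices through which the detour from `s` to `t` in `G` has length at most `D`. -/
noncomputable def hubs [Fintype V] (G : SimpleGraph V) (w : Sym2 V → ℝ≥0∞) (D : ℝ≥0∞) (s t : V) :
    Finset V :=
  Finset.univ.filter fun x => gdist G w s x + gdist G w x t ≤ D

lemma IsGeodesic.pathNbhd_subset_hubs [Fintype V] (hHG : H ≤ G) (hp : IsGeodesic w p)
    (hD : gdist G w s t + 4 * maxEdge G w p ≤ D) :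
    pathNbhd H w p p.length ⊆ hubs G w D s t := by
  intro x hx
  obtain ⟨g, hg, hadj, hle⟩ := mem_pathNbhd.1 hx
  have hgx : gdist G w (p.getVert g) x ≤ maxEdge G w p := (gdist_le_of_adj (hHG hadj)).trans hle
  have hsg : gdist G w s (p.getVert g) ≤ segWeight w p 0 g := by
    simpa using (coversSegment_self hg.le).gdist_le (p := p) (w := w) g.zero_le
  have hgt : gdist G w (p.getVert g) t ≤ segWeight w p g p.length := by
    simpa using (coversSegment_self le_rfl).gdist_le (p := p) (w := w) hg.le
  refine Finset.mem_filter.2 ⟨Finset.mem_univ x, ?_⟩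
  calc gdist G w s x + gdist G w x t
      ≤ (segWeight w p 0 g + maxEdge G w p) + (maxEdge G w p + segWeight w p g p.length) :=
        add_le_add ((gdist_triangle _ _ _).trans (add_le_add hsg hgx))
          ((gdist_triangle _ _ _).trans (add_le_add (gdist_comm x _ ▸ hgx) hgt))
    _ = segWeight w p 0 g + segWeight w p g p.length + 2 * maxEdge G w p := by ring
    _ = gdist G w s t + 2 * maxEdge G w p := by
        rw [segWeight_add g.zero_le hg.le, hp.segWeight_eq_gdist]
    _ ≤ gdist G w s t + 4 * maxEdge G w p := by gcongr; norm_num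
    _ ≤ D := hD

/-- Every detour from `s` via `x ∈ A` and `y ∈ A'` to `t` has length at most `D`, if the outer two
legs run in `B` and only the leg from `x` to `y` may also use `M`. -/
def IsGateway (B M : SimpleGraph V) (w : Sym2 V → ℝ≥0∞) (D : ℝ≥0∞) (s t : V)
    (A A' : Finset V) : Prop :=
  ∀ x ∈ A, ∀ y ∈ A', gdist B w s x + gdist (B ⊔ M) w x y + gdist B w y t ≤ D

lemma IsGeodesic.isGateway_pathNbhd [Fintype V] {M : SimpleGraph V} (hHB : H ≤ B)
    (hp : IsGeodesic w p) (hD : gdist G w s t + 4 * maxEdge G w p ≤ D) {a b : ℕ}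
    (hab : a + b ≤ p.length) (ha : CoversSegment B p 0 a) (hb : CoversSegment B p.reverse 0 b)
    (hM : CoversSegment (B ⊔ M) p 0 p.length) :
    IsGateway B M w D s t (pathNbhd H w p (a + 1)) (pathNbhd H w p.reverse (b + 1)) := by
  intro x hx y hy
  obtain ⟨g, hga, hgx, hsx⟩ := exists_gdist_le_of_mem_pathNbhd hHB ha hx
  obtain ⟨h, hhb, hhy, hty⟩ := exists_gdist_le_of_mem_pathNbhd hHB hb hy
  rw [SimpleGraph.Walk.getVert_reverse, maxEdge_reverse] at hhy
  rw [maxEdge_reverse, segWeight_reverse (by omega), Nat.sub_zero] at hty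
  have hgj : g ≤ p.length - h := by omega
  have hxy : gdist (B ⊔ M) w x y ≤
      maxEdge G w p + (segWeight w p g (p.length - h) + maxEdge G w p) := by
    refine (gdist_triangle _ (p.getVert g) _).trans (add_le_add ?_ ?_)
    · exact (gdist_anti le_sup_left _ _).trans (gdist_comm x _ ▸ hgx)
    · exact (gdist_triangle _ (p.getVert (p.length - h)) _).trans <| add_le_add
        ((hM.subset g.zero_le (by omega)).gdist_le hgj) ((gdist_anti le_sup_left _ _).trans hhy)
  calc gdist B w s x + gdist (B ⊔ M) w x y + gdist B w y t
      ≤ (segWeight w p 0 g + maxEdge G w p) +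
          (maxEdge G w p + (segWeight w p g (p.length - h) + maxEdge G w p)) +
          (segWeight w p (p.length - h) p.length + maxEdge G w p) :=
        add_le_add (add_le_add hsx hxy) (gdist_comm y t ▸ hty)
    _ = segWeight w p 0 g + segWeight w p g (p.length - h) +
          segWeight w p (p.length - h) p.length + 4 * maxEdge G w p := by ring
    _ = gdist G w s t + 4 * maxEdge G w p := by
        rw [segWeight_add g.zero_le hgj, segWeight_add (Nat.zero_le _) (Nat.sub_le _ _),
          hp.segWeight_eq_gdist]
    _ ≤ D := hD

lemma IsGeodesic.gdist_le_of_coversSegment (hp : IsGeodesic w p)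
    (hD : gdist G w s t + 4 * maxEdge G w p ≤ D) (hB : CoversSegment B p 0 p.length) :
    gdist B w s t ≤ D := by
  have hle : gdist B w s t ≤ segWeight w p 0 p.length := by
    simpa using hB.gdist_le (w := w) (Nat.zero_le _)
  exact hle.trans (hp.segWeight_eq_gdist.trans_le (le_self_add.trans hD))

/-- A pair whose path misses many edges has many hubs. Otherwise `M` completes the whole path, and
`F` completes a prefix and a suffix which are long enough to have large neighbourhoods. -/
lemma IsGeodesic.exists_pair_augmentation [Fintype V] (hw : PosWeights G w) (hHG : H ≤ G)
    (hH : IsLightInit G H w d) (hp : IsGeodesic w p)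
    (hD : gdist G w s t + 4 * maxEdge G w p ≤ D) (l K : ℕ) :
    ∃ F ≤ G, F.edgeSet.ncard ≤ 2 * l ∧ ∀ B, H ⊔ F ≤ B →
      gdist B w s t ≤ D ∨ (K + 1) * d ≤ (hubs G w D s t).card * 3 ∨
      ∃ M ≤ G, M.edgeSet.ncard ≤ K ∧ ∃ A A', (l + 1) * d ≤ A.card * 3 ∧
        (l + 1) * d ≤ A'.card * 3 ∧ IsGateway B M w D s t A A' := by
  rcases lt_or_ge K (missing H p p.length).card with hK | hK
  · refine ⟨⊥, bot_le, by simp, fun B _ => Or.inr (Or.inl ?_)⟩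
    calc (K + 1) * d ≤ (missing H p p.length).card * d := Nat.mul_le_mul_right d hK
      _ ≤ (pathNbhd H w p p.length).card * 3 := hp.card_missing_mul_le hw hHG hH le_rfl
      _ ≤ _ := Nat.mul_le_mul_right 3 (Finset.card_le_card (hp.pathNbhd_subset_hubs hHG hD))
  obtain ⟨M, hMG, hMK, hM⟩ := exists_coversSegment_sup (p := p) H le_rfl
  obtain ⟨F₁, hFG₁, hFl₁, a, ha, hA⟩ := hp.exists_prefix_completion hw hHG hH l
  obtain ⟨F₂, hFG₂, hFl₂, b, hb, hA'⟩ := hp.reverse.exists_prefix_completion hw hHG hH l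
  rw [SimpleGraph.Walk.length_reverse] at hA'
  refine ⟨F₁ ⊔ F₂, sup_le hFG₁ hFG₂, (ncard_edgeSet_sup_le F₁ F₂).trans (by omega),
    fun B hB => ?_⟩
  have haB : CoversSegment B p 0 a := ha.mono (le_trans (by gcongr; exact le_sup_left) hB)
  have hbB : CoversSegment B p.reverse 0 b := hb.mono (le_trans (by gcongr; exact le_sup_right) hB)
  by_cases hcover : p.length ≤ a + b
  · exact Or.inl (hp.gdist_le_of_coversSegment hD (haB.trans hbB.of_reverse (by omega)))
  refine Or.inr (Or.inr ⟨M, hMG, hMK.trans hK, _, _, hA.resolve_left (by omega),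
    hA'.resolve_left (by omega), hp.isGateway_pathNbhd ?_ hD (by omega) haB hbB ?_⟩)
  · exact le_sup_left.trans hB
  · exact hM.mono (sup_le_sup_right (le_sup_left.trans hB) M)

end Completion

section ShortestPathTree

variable {V : Type} {G : SimpleGraph V} {w : Sym2 V → ℝ≥0∞} {x : V}

lemma IsGeodesic.exists_adj_gdist_add_eq {v : V} {p : G.Walk x v} (hp : IsGeodesic w p)
    (hxv : x ≠ v) :
    ∃ u, G.Adj u v ∧ gdist G w x u + w s(u, v) = gdist G w x v := by
  have hnil : ¬ p.Nil := fun h => hxv h.eq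
  refine ⟨p.penultimate, p.adj_penultimate hnil, le_antisymm ?_ ?_⟩
  · calc gdist G w x p.penultimate + w s(p.penultimate, v)
        ≤ walkWeight G w p.dropLast + w s(p.penultimate, v) := by
          gcongr
          exact gdist_le_walkWeight _
      _ = walkWeight G w (p.dropLast.concat (p.adj_penultimate hnil)) := by
          rw [walkWeight, walkWeight, SimpleGraph.Walk.edges_concat, List.concat_eq_append,
            List.map_append, List.sum_append, List.map_singleton, List.sum_singleton]
      _ = gdist G w x v := by rw [SimpleGraph.Walk.concat_dropLast, hp]
  · exact (gdist_triangle _ _ _).trans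
      (add_le_add_right (gdist_le_of_adj (p.adj_penultimate hnil)) _)

lemma exists_shortestPathTree [Fintype V] (hw : PosWeights G w) (p : ∀ v, G.Walk x v)
    (hp : ∀ v, IsGeodesic w (p v)) :
    ∃ T ≤ G, T.edgeSet.ncard ≤ Fintype.card V ∧ ∀ v, gdist T w x v ≤ gdist G w x v := by
  choose! parent hadj hparent using fun v (hv : x ≠ v) => (hp v).exists_adj_gdist_add_eq hv
  let E : Finset (Sym2 V) := (Finset.univ.filter fun v => x ≠ v).image fun v => s(parent v, v)
  have hE {v : V} (hv : x ≠ v) : (SimpleGraph.fromEdgeSet (E : Set (Sym2 V))).Adj (parent v) v :=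
    ⟨Finset.mem_image_of_mem _ (Finset.mem_filter.2 ⟨Finset.mem_univ v, hv⟩), (hadj v hv).ne⟩
  refine ⟨SimpleGraph.fromEdgeSet E, ?_, (ncard_edgeSet_fromEdgeSet_le E).trans
    (Finset.card_image_le.trans (Finset.card_filter_le _ _)), fun v => ?_⟩
  · rw [SimpleGraph.fromEdgeSet_le]
    rintro e ⟨he, -⟩
    obtain ⟨v, hv, rfl⟩ := Finset.mem_image.1 he
    exact hadj v (Finset.mem_filter.1 hv).2
  have hcloser {v : V} (hv : x ≠ v) : gdist G w x (parent v) < gdist G w x v := by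
    have hfin : gdist G w x (parent v) ≠ ⊤ := by
      rw [← (hp (parent v)).segWeight_eq_gdist]
      exact segWeight_ne_top hw le_rfl
    rw [← hparent v hv]
    exact ENNReal.lt_add_right hfin (hw _ (hadj v hv)).1.ne'
  have hwf : WellFounded (InvImage (· < ·) (gdist G w x)) :=
    Finite.wellFounded_of_trans_of_irrefl _
  induction v using hwf.induction with
  | h v ih =>
    rcases eq_or_ne x v with rfl | hv
    · simp [gdist_self]
    calc gdist (SimpleGraph.fromEdgeSet E) w x v
        ≤ gdist (SimpleGraph.fromEdgeSet E) w x (parent v) + w s(parent v, v) :=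
          (gdist_triangle _ _ _).trans (add_le_add_right (gdist_le_of_adj (hE hv)) _)
      _ ≤ gdist G w x (parent v) + w s(parent v, v) := by
          gcongr
          exact ih _ (hcloser hv)
      _ = gdist G w x v := hparent v hv

end ShortestPathTree

section HittingSets

variable {ι V : Type*} [Fintype V]

lemma exists_popular_element [Nonempty V] (U : Finset ι) (A : ι → Finset V) {α : ℝ}
    (hA : ∀ i ∈ U, α * Fintype.card V ≤ (A i).card) :
    ∃ v, α * U.card ≤ (U.filter fun i => v ∈ A i).card := by
  have hcount : ∑ v : V, ((U.filter fun i => v ∈ A i).card : ℝ) = ∑ i ∈ U, ((A i).card : ℝ) := by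
    exact_mod_cast (Finset.sum_card_bipartiteAbove_eq_sum_card_bipartiteBelow
      (s := U) (t := Finset.univ) fun i v => v ∈ A i).symm.trans (by simp [Finset.bipartiteAbove])
  have hsum : ∑ _v : V, α * (U.card : ℝ) ≤ ∑ v : V, ((U.filter fun i => v ∈ A i).card : ℝ) := by
    rw [hcount, Finset.sum_const, Finset.card_univ, nsmul_eq_mul]
    calc (Fintype.card V : ℝ) * (α * U.card) = ∑ _i ∈ U, α * (Fintype.card V : ℝ) := by
          rw [Finset.sum_const, nsmul_eq_mul]
          ring
      _ ≤ _ := Finset.sum_le_sum hA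
  obtain ⟨v, -, hv⟩ := Finset.exists_le_of_sum_le Finset.univ_nonempty hsum
  exact ⟨v, hv⟩

lemma exists_disjoint_card_le [Nonempty V] (Q : Finset ι) (A : ι → Finset V) {α : ℝ}
    (hα : α ≤ 1) (hA : ∀ i ∈ Q, α * Fintype.card V ≤ (A i).card) (r : ℕ) :
    ∃ R : Finset V, R.card ≤ r ∧
      ((Q.filter fun i => Disjoint (A i) R).card : ℝ) ≤ (1 - α) ^ r * Q.card := by
  induction r with
  | zero => exact ⟨∅, by simp⟩
  | succ r ih =>
    obtain ⟨R, hRr, hR⟩ := ih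
    set U := Q.filter fun i => Disjoint (A i) R
    obtain ⟨v, hv⟩ := exists_popular_element U A fun i hi => hA i (Finset.mem_filter.1 hi).1
    refine ⟨insert v R, (Finset.card_insert_le v R).trans (by omega), ?_⟩
    have hU : (Q.filter fun i => Disjoint (A i) (insert v R)) = U.filter fun i => v ∉ A i := by
      ext i
      simp only [U, Finset.mem_filter, Finset.disjoint_insert_right]
      tauto
    have hsplit : ((U.filter fun i => v ∈ A i).card : ℝ) + (U.filter fun i => v ∉ A i).card =
        U.card := by
      exact_mod_cast Finset.card_filter_add_card_filter_not fun i => v ∈ A i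
    calc ((Q.filter fun i => Disjoint (A i) (insert v R)).card : ℝ)
        ≤ (1 - α) * U.card := by rw [hU]; linarith
      _ ≤ (1 - α) * ((1 - α) ^ r * Q.card) :=
        mul_le_mul_of_nonneg_left hR (sub_nonneg.2 hα)
      _ = (1 - α) ^ (r + 1) * Q.card := by ring

lemma one_sub_inv_pow_le {z : ℝ} (hz : 1 ≤ z) {r : ℕ} (hr : 2 * z ≤ r) :
    (1 - z⁻¹) ^ r ≤ 1 / 4 := by
  have hz0 : 0 < z := by linarith
  have hbase : 1 - z⁻¹ ≤ Real.exp (-z⁻¹) := by linarith [Real.add_one_le_exp (-z⁻¹)]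
  have hexp : 4 ≤ Real.exp 2 := by
    have := Real.add_one_le_exp 1
    rw [show (2 : ℝ) = 1 + 1 by norm_num, Real.exp_add]
    nlinarith
  calc (1 - z⁻¹) ^ r ≤ Real.exp (-z⁻¹) ^ r :=
        pow_le_pow_left₀ (sub_nonneg.2 (inv_le_one_of_one_le₀ hz)) hbase r
    _ = Real.exp (-(r / z)) := by
        rw [← Real.exp_nat_mul]
        ring_nf
    _ ≤ Real.exp (-2) := Real.exp_le_exp.2 (neg_le_neg ((le_div_iff₀ hz0).2 hr))
    _ ≤ 1 / 4 := by
        rw [Real.exp_neg, one_div]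
        gcongr

lemma exists_hittingSet [Nonempty V] (Q : Finset ι) (A : ι → Finset V) {z : ℝ} (hz : 1 ≤ z)
    (hA : ∀ i ∈ Q, (Fintype.card V : ℝ) ≤ z * (A i).card) :
    ∃ R : Finset V, (R.card : ℝ) ≤ 3 * z ∧
      4 * (Q.filter fun i => Disjoint (A i) R).card ≤ Q.card := by
  obtain ⟨R, hR, hmiss⟩ := exists_disjoint_card_le Q A (inv_le_one_of_one_le₀ hz)
    (fun i hi => (inv_mul_le_iff₀ (by linarith)).2 (hA i hi)) ⌈2 * z⌉₊
  refine ⟨R, ?_, ?_⟩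
  · calc (R.card : ℝ) ≤ ⌈2 * z⌉₊ := Nat.cast_le.2 hR
      _ ≤ 3 * z := by linarith [Nat.ceil_lt_add_one (show 0 ≤ 2 * z by linarith)]
  · have hquarter := mul_le_mul_of_nonneg_right (one_sub_inv_pow_le hz (Nat.le_ceil _))
      (Nat.cast_nonneg (α := ℝ) Q.card)
    have hreal : (4 * (Q.filter fun i => Disjoint (A i) R).card : ℝ) ≤ Q.card := by linarith
    exact_mod_cast hreal

end HittingSets

section Rounds

variable {V : Type} {G B H H' : SimpleGraph V} {w : Sym2 V → ℝ≥0∞} {D : V × V → ℝ≥0∞}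

/-- The pairs in `P` whose distance in `H` exceeds the allowance `D`. -/
noncomputable def unspanned (H : SimpleGraph V) (w : Sym2 V → ℝ≥0∞) (D : V × V → ℝ≥0∞)
    (P : Finset (V × V)) : Finset (V × V) :=
  P.filter fun i => D i < gdist H w i.1 i.2

lemma mem_unspanned {P : Finset (V × V)} {i : V × V} :
    i ∈ unspanned H w D P ↔ i ∈ P ∧ D i < gdist H w i.1 i.2 :=
  Finset.mem_filter

lemma lt_gdist_of_mem_unspanned {P : Finset (V × V)} {i : V × V} (hi : i ∈ unspanned H' w D P)
    (hH : H ≤ H') : D i < gdist H w i.1 i.2 :=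
  (mem_unspanned.1 hi).2.trans_le (gdist_anti hH _ _)

/-- The pair `(s, t)` has a gateway between sets of at least `n / z` vertices which is supported by
at most `K` edges of `G` in addition to those of `B`. -/
def HasCheapGateway [Fintype V] (G B : SimpleGraph V) (w : Sym2 V → ℝ≥0∞) (D : ℝ≥0∞) (z : ℝ)
    (K : ℕ) (s t : V) : Prop :=
  ∃ M ≤ G, M.edgeSet.ncard ≤ K ∧ ∃ A A' : Finset V, (Fintype.card V : ℝ) ≤ z * A.card ∧
    (Fintype.card V : ℝ) ≤ z * A'.card ∧ IsGateway B M w D s t A A'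

lemma exists_hub_subgraph [Fintype V] [Nonempty V] (hw : PosWeights G w)
    {π : ∀ s t, G.Walk s t} (hπ : IsShortestPathScheme G w π) {z : ℝ} (hz : 1 ≤ z)
    {Q : Finset (V × V)}
    (hQ : ∀ i ∈ Q, (Fintype.card V : ℝ) ≤ z * (hubs G w (D i) i.1 i.2).card) :
    ∃ H ≤ G, (H.edgeSet.ncard : ℝ) ≤ 3 * z * Fintype.card V ∧
      4 * (unspanned H w D Q).card ≤ Q.card := by
  obtain ⟨R, hR, hmiss⟩ := exists_hittingSet Q _ hz hQ
  choose T hTG hTcard hT using fun x => exists_shortestPathTree hw (π x) (hπ x)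
  refine ⟨R.sup T, Finset.sup_le fun x _ => hTG x, ?_, le_trans ?_ hmiss⟩
  · calc ((R.sup T).edgeSet.ncard : ℝ) ≤ R.card * Fintype.card V :=
          mod_cast ncard_edgeSet_finset_sup_le R T fun x _ => hTcard x
      _ ≤ 3 * z * Fintype.card V := by gcongr
  gcongr
  intro i hi
  refine Finset.mem_filter.2 ⟨(mem_unspanned.1 hi).1, Finset.disjoint_right.2 fun x hxR hx => ?_⟩
  have hlong := lt_gdist_of_mem_unspanned hi (Finset.le_sup hxR)
  refine hlong.not_ge ((gdist_triangle _ x _).trans ?_)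
  rw [gdist_comm]
  refine (add_le_add (hT x _) (hT x _)).trans ?_
  rw [gdist_comm]
  exact (Finset.mem_filter.1 hx).2

/-- For each pair `(x, y)` of hitting vertices it is enough to keep the supporting graph which is
best from `x` to `y`: every pair which enters at `x` and leaves at `y` profits from it. -/
lemma exists_gateway_subgraph [Fintype V] [Nonempty V] {z : ℝ} (hz : 1 ≤ z) {K : ℕ}
    {Q : Finset (V × V)} (hQ : ∀ i ∈ Q, HasCheapGateway G B w (D i) z K i.1 i.2) :
    ∃ H ≤ G, (H.edgeSet.ncard : ℝ) ≤ (3 * z) ^ 2 * K ∧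
      2 * (unspanned (B ⊔ H) w D Q).card ≤ Q.card := by
  rcases Q.eq_empty_or_nonempty with rfl | hne
  · exact ⟨⊥, bot_le, by simpa using by positivity, by simp [unspanned]⟩
  choose! M hMG hMK A A' hA hA' hgate using hQ
  obtain ⟨R, hR, hmiss⟩ := exists_hittingSet Q A hz hA
  obtain ⟨R', hR', hmiss'⟩ := exists_hittingSet Q A' hz hA'
  choose best hbestQ hbest using fun r : V × V =>
    Q.exists_min_image (fun i => gdist (B ⊔ M i) w r.1 r.2) hne
  refine ⟨(R ×ˢ R').sup fun r => M (best r), Finset.sup_le fun r _ => hMG _ (hbestQ r), ?_, ?_⟩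
  · calc (((R ×ˢ R').sup fun r => M (best r)).edgeSet.ncard : ℝ) ≤ R.card * R'.card * K := by
          rw [← Nat.cast_mul, ← Finset.card_product]
          exact_mod_cast ncard_edgeSet_finset_sup_le _ _ fun r _ => hMK _ (hbestQ r)
      _ ≤ (3 * z) * (3 * z) * K := by gcongr
      _ = (3 * z) ^ 2 * K := by ring
  have hsub : unspanned (B ⊔ (R ×ˢ R').sup fun r => M (best r)) w D Q ⊆
      (Q.filter fun i => Disjoint (A i) R) ∪ Q.filter fun i => Disjoint (A' i) R' := by
    intro i hi
    have hiQ := (mem_unspanned.1 hi).1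
    by_contra hmeet
    simp only [Finset.mem_union, Finset.mem_filter, hiQ, true_and, not_or,
      Finset.not_disjoint_iff] at hmeet
    obtain ⟨⟨x, hxA, hxR⟩, y, hyA', hyR'⟩ := hmeet
    have hxy : M (best (x, y)) ≤ (R ×ˢ R').sup fun r => M (best r) :=
      Finset.le_sup (f := fun r => M (best r)) (Finset.mk_mem_product hxR hyR')
    refine (mem_unspanned.1 hi).2.not_ge (le_trans ?_ (hgate i hiQ x hxA y hyA'))
    refine (gdist_triangle _ y _).trans (add_le_add ((gdist_triangle _ x _).trans
      (add_le_add (gdist_anti le_sup_left _ _) ?_)) (gdist_anti le_sup_left _ _))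
    exact (gdist_anti (sup_le_sup_left hxy B) x y).trans (hbest (x, y) i hiQ)
  have := (Finset.card_le_card hsub).trans (Finset.card_union_le _ _)
  omega

lemma exists_base_subgraph [Fintype V] (hw : PosWeights G w) {π : ∀ s t, G.Walk s t}
    (hπ : IsShortestPathScheme G w π) (P : Finset (V × V))
    (hD : ∀ i, gdist G w i.1 i.2 + 4 * maxEdge G w (π i.1 i.2) ≤ D i) {d l K : ℕ} {z z' : ℝ}
    (hl : ∀ c : ℕ, (l + 1) * d ≤ c * 3 → (Fintype.card V : ℝ) ≤ z' * c)
    (hK : ∀ c : ℕ, (K + 1) * d ≤ c * 3 → (Fintype.card V : ℝ) ≤ z * c) :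
    ∃ B ≤ G, B.edgeSet.ncard ≤ Fintype.card V * d + P.card * (2 * l) ∧
      ∀ i ∈ unspanned B w D P,
        (Fintype.card V : ℝ) ≤ z * (hubs G w (D i) i.1 i.2).card ∨
          HasCheapGateway G B w (D i) z' K i.1 i.2 := by
  obtain ⟨H, hHG, hHcard, hH⟩ := exists_isLightInit G w d
  choose F hFG hFcard hF using fun i : V × V =>
    IsGeodesic.exists_pair_augmentation hw hHG hH (hπ i.1 i.2) (hD i) l K
  refine ⟨H ⊔ P.sup F, sup_le hHG (Finset.sup_le fun i _ => hFG i), ?_, fun i hi => ?_⟩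
  · exact (ncard_edgeSet_sup_le _ _).trans
      (add_le_add hHcard (ncard_edgeSet_finset_sup_le P F fun i _ => hFcard i))
  obtain ⟨hiP, hlong⟩ := mem_unspanned.1 hi
  rcases hF i _ (sup_le_sup_left (Finset.le_sup hiP) H) with
    hshort | hhubs | ⟨M, hMG, hMK, A, A', hA, hA', hgate⟩
  · exact absurd hlong hshort.not_gt
  · exact Or.inl (hK _ hhubs)
  · exact Or.inr ⟨M, hMG, hMK, A, A', hl _ hA, hl _ hA', hgate⟩

lemma exists_round_subgraph [Fintype V] [Nonempty V] (hw : PosWeights G w)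
    {π : ∀ s t, G.Walk s t} (hπ : IsShortestPathScheme G w π) (P : Finset (V × V))
    (hD : ∀ i, gdist G w i.1 i.2 + 4 * maxEdge G w (π i.1 i.2) ≤ D i) {d l K : ℕ} {z z' : ℝ}
    (hz : 1 ≤ z) (hz' : 1 ≤ z')
    (hl : ∀ c : ℕ, (l + 1) * d ≤ c * 3 → (Fintype.card V : ℝ) ≤ z' * c)
    (hK : ∀ c : ℕ, (K + 1) * d ≤ c * 3 → (Fintype.card V : ℝ) ≤ z * c) :
    ∃ H ≤ G, (H.edgeSet.ncard : ℝ) ≤ Fintype.card V * d + P.card * (2 * l) +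
        (3 * z * Fintype.card V + (3 * z') ^ 2 * K) ∧
      4 * (unspanned H w D P).card ≤ 3 * P.card := by
  obtain ⟨B, hBG, hBcard, hB⟩ := exists_base_subgraph hw hπ P hD hl hK
  set Q₁ := P.filter fun i => (Fintype.card V : ℝ) ≤ z * (hubs G w (D i) i.1 i.2).card
  set Q₂ := P.filter fun i => HasCheapGateway G B w (D i) z' K i.1 i.2
  obtain ⟨H₁, hHG₁, hHcard₁, hH₁⟩ := exists_hub_subgraph (Q := Q₁) hw hπ hz
    fun i hi => (Finset.mem_filter.1 hi).2
  obtain ⟨H₂, hHG₂, hHcard₂, hH₂⟩ := exists_gateway_subgraph (Q := Q₂) hz'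
    fun i hi => (Finset.mem_filter.1 hi).2
  refine ⟨B ⊔ (H₁ ⊔ H₂), sup_le hBG (sup_le hHG₁ hHG₂), ?_, ?_⟩
  · have hcount : ((B ⊔ (H₁ ⊔ H₂)).edgeSet.ncard : ℝ) ≤
        B.edgeSet.ncard + (H₁.edgeSet.ncard + H₂.edgeSet.ncard) :=
      mod_cast (ncard_edgeSet_sup_le _ _).trans (add_le_add_right (ncard_edgeSet_sup_le _ _) _)
    refine hcount.trans (add_le_add ?_ (add_le_add hHcard₁ hHcard₂))
    exact_mod_cast hBcard
  have hsub : unspanned (B ⊔ (H₁ ⊔ H₂)) w D P ⊆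
      unspanned H₁ w D Q₁ ∪ unspanned (B ⊔ H₂) w D Q₂ := by
    intro i hi
    have hiP := (mem_unspanned.1 hi).1
    rw [Finset.mem_union]
    exact (hB i (mem_unspanned.2 ⟨hiP, lt_gdist_of_mem_unspanned hi le_sup_left⟩)).imp
      (fun hhub => mem_unspanned.2 ⟨Finset.mem_filter.2 ⟨hiP, hhub⟩,
        lt_gdist_of_mem_unspanned hi (le_sup_left.trans le_sup_right)⟩)
      (fun hgate => mem_unspanned.2 ⟨Finset.mem_filter.2 ⟨hiP, hgate⟩,
        lt_gdist_of_mem_unspanned hi (sup_le_sup_left le_sup_right B)⟩)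
  have := (Finset.card_le_card hsub).trans (Finset.card_union_le _ _)
  have : Q₁.card ≤ P.card := Finset.card_filter_le _ _
  have : Q₂.card ≤ P.card := Finset.card_filter_le _ _
  omega

lemma exists_round_parameters {n y : ℝ} (hn : 0 ≤ n) (hy : 1 ≤ y) :
    ∃ d l K : ℕ, n * d + y ^ 7 * (2 * l) +
        (3 * (3 * y ^ 2) * n + (3 * (3 * y ^ 3)) ^ 2 * K) ≤ 94 * n * y ^ 2 ∧
      (∀ c : ℕ, (l + 1) * d ≤ c * 3 → n ≤ 3 * y ^ 3 * c) ∧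
      ∀ c : ℕ, (K + 1) * d ≤ c * 3 → n ≤ 3 * y ^ 2 * c := by
  have : 0 < y := by linarith
  have hsize {m k : ℕ} (hm : n / y ^ (k + 2) ≤ m + 1) (c : ℕ) (hc : (m + 1) * ⌈y ^ 2⌉₊ ≤ c * 3) :
      n ≤ 3 * y ^ k * c := by
    have hc' : ((m : ℝ) + 1) * ⌈y ^ 2⌉₊ ≤ c * 3 := mod_cast hc
    calc n = y ^ k * (n / y ^ (k + 2) * y ^ 2) := by
          field_simp
          ring
      _ ≤ y ^ k * ((m + 1) * ⌈y ^ 2⌉₊) := by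
          gcongr
          exact Nat.le_ceil _
      _ ≤ y ^ k * (c * 3) := by gcongr
      _ = 3 * y ^ k * c := by ring
  have hfloor (k : ℕ) : (⌊n / y ^ k⌋₊ : ℝ) * y ^ k ≤ n :=
    (le_div_iff₀ (by positivity)).1 (Nat.floor_le (by positivity))
  refine ⟨⌈y ^ 2⌉₊, ⌊n / y ^ 5⌋₊, ⌊n / y ^ 4⌋₊, ?_,
    hsize (Nat.lt_floor_add_one _).le, hsize (Nat.lt_floor_add_one _).le⟩
  have hceil : (⌈y ^ 2⌉₊ : ℝ) ≤ 2 * y ^ 2 := by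
    linarith [Nat.ceil_lt_add_one (sq_nonneg y), one_le_pow₀ hy (n := 2)]
  calc n * ⌈y ^ 2⌉₊ + y ^ 7 * (2 * ⌊n / y ^ 5⌋₊) +
        (3 * (3 * y ^ 2) * n + (3 * (3 * y ^ 3)) ^ 2 * ⌊n / y ^ 4⌋₊)
      = n * ⌈y ^ 2⌉₊ + 2 * y ^ 2 * (⌊n / y ^ 5⌋₊ * y ^ 5) + 9 * y ^ 2 * n +
          81 * y ^ 2 * (⌊n / y ^ 4⌋₊ * y ^ 4) := by ring
    _ ≤ n * (2 * y ^ 2) + 2 * y ^ 2 * n + 9 * y ^ 2 * n + 81 * y ^ 2 * n := by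
        gcongr
        exacts [hfloor 5, hfloor 4]
    _ = 94 * n * y ^ 2 := by ring

lemma exists_round_subgraph_rpow [Fintype V] [Nonempty V] (hw : PosWeights G w)
    {π : ∀ s t, G.Walk s t} (hπ : IsShortestPathScheme G w π) {P : Finset (V × V)}
    (hP : P.Nonempty) (hD : ∀ i, gdist G w i.1 i.2 + 4 * maxEdge G w (π i.1 i.2) ≤ D i) :
    ∃ H ≤ G, (H.edgeSet.ncard : ℝ) ≤ 94 * Fintype.card V * (P.card : ℝ) ^ ((2 : ℝ) / 7) ∧
      4 * (unspanned H w D P).card ≤ 3 * P.card := by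
  set y := (P.card : ℝ) ^ ((1 : ℝ) / 7)
  have hy : 1 ≤ y := Real.one_le_rpow (mod_cast hP.card_pos) (by norm_num)
  have hypow (k : ℕ) : (P.card : ℝ) ^ ((k : ℝ) / 7) = y ^ k := by
    rw [← Real.rpow_natCast, ← Real.rpow_mul (Nat.cast_nonneg _)]
    ring_nf
  have hP7 : (P.card : ℝ) = y ^ 7 := by simpa using hypow 7
  have hP2 : (P.card : ℝ) ^ ((2 : ℝ) / 7) = y ^ 2 := mod_cast hypow 2
  obtain ⟨d, l, K, hcount, hl, hK⟩ :=
    exists_round_parameters (n := Fintype.card V) (Nat.cast_nonneg _) hy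
  obtain ⟨H, hHG, hcard, hround⟩ := exists_round_subgraph hw hπ P hD
    (by linarith [one_le_pow₀ hy (n := 2)]) (by linarith [one_le_pow₀ hy (n := 3)]) hl hK
  rw [hP7] at hcard
  exact ⟨H, hHG, hP2 ▸ hcard.trans hcount, hround⟩

lemma exists_spanner_of_rounds {a c : ℝ} (ha : 0 < a) (hc : 0 ≤ c)
    (hround : ∀ P : Finset (V × V), P.Nonempty →
      ∃ H ≤ G, (H.edgeSet.ncard : ℝ) ≤ c * (P.card : ℝ) ^ a ∧
        4 * (unspanned H w D P).card ≤ 3 * P.card) (P : Finset (V × V)) :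
    ∃ H ≤ G, (H.edgeSet.ncard : ℝ) ≤ c / (1 - (3 / 4) ^ a) * (P.card : ℝ) ^ a ∧
      ∀ i ∈ P, gdist H w i.1 i.2 ≤ D i := by
  have hq : 0 < 1 - (3 / 4 : ℝ) ^ a := sub_pos.2 (Real.rpow_lt_one (by norm_num) (by norm_num) ha)
  induction P using Finset.strongInduction with
  | H P ih =>
    rcases P.eq_empty_or_nonempty with rfl | hP
    · exact ⟨⊥, bot_le, by simp [Real.zero_rpow ha.ne'], by simp⟩
    obtain ⟨H, hHG, hHcard, hdecay⟩ := hround P hP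
    have hdecay' : ((unspanned H w D P).card : ℝ) ≤ 3 / 4 * P.card := by
      have : (4 * (unspanned H w D P).card : ℝ) ≤ 3 * P.card := mod_cast hdecay
      linarith
    have hssub : unspanned H w D P ⊂ P := by
      refine (Finset.filter_subset _ _).ssubset_of_ne fun h => ?_
      rw [show unspanned H w D P = P from h] at hdecay
      have := hP.card_pos
      omega
    obtain ⟨H', hHG', hHcard', hspan⟩ := ih _ hssub
    refine ⟨H ⊔ H', sup_le hHG hHG', ?_, fun i hi => ?_⟩
    · calc ((H ⊔ H').edgeSet.ncard : ℝ) ≤ H.edgeSet.ncard + H'.edgeSet.ncard :=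
            mod_cast ncard_edgeSet_sup_le H H'
        _ ≤ c * (P.card : ℝ) ^ a + c / (1 - (3 / 4) ^ a) * (3 / 4 * P.card) ^ a := by
            refine add_le_add hHcard (hHcard'.trans ?_)
            gcongr
        _ = c / (1 - (3 / 4) ^ a) * (P.card : ℝ) ^ a := by
            rw [Real.mul_rpow (by norm_num) (Nat.cast_nonneg _)]
            field_simp
            ring
    · by_cases hiH : gdist H w i.1 i.2 ≤ D i
      · exact (gdist_anti le_sup_left _ _).trans hiH
      · exact (gdist_anti le_sup_right _ _).trans
          (hspan i (mem_unspanned.2 ⟨hi, not_le.1 hiH⟩))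

end Rounds

/-- Every connected weighted graph `G` on `n` vertices and every set
`𝒫 ⊆ V × V` of vertex pairs admits a subgraph `H` of `G` on at most `C·n·|𝒫|^(2/7)` edges
(for a universal constant `C`) with `d_H(s,t) ≤ d_G(s,t) + 4·W(s,t)` for all `(s,t) ∈ 𝒫`. -/
theorem pairwise_four_W_spanner :
    ∃ C : ℝ, 0 < C ∧
      ∀ (V : Type) [Fintype V] (G : SimpleGraph V) (w : Sym2 V → ℝ≥0∞),
        G.Connected → PosWeights G w →
        ∀ π : (s t : V) → G.Walk s t, IsShortestPathScheme G w π →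
          ∀ P : Set (V × V),
            ∃ H : SimpleGraph V, H ≤ G ∧
              (H.edgeSet.ncard : ℝ) ≤
                C * (Fintype.card V : ℝ) * (P.ncard : ℝ) ^ ((2 : ℝ) / 7) ∧
              ∀ s t : V, (s, t) ∈ P →
                gdist H w s t ≤ gdist G w s t + 4 * maxEdge G w (π s t) := by
  have hq : (3 / 4 : ℝ) ^ ((2 : ℝ) / 7) < 1 :=
    Real.rpow_lt_one (by norm_num) (by norm_num) (by norm_num)
  refine ⟨94 / (1 - (3 / 4) ^ ((2 : ℝ) / 7)), div_pos (by norm_num) (sub_pos.2 hq), ?_⟩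
  intro V _ G w hG hw π hπ P
  have := hG.nonempty
  let D : V × V → ℝ≥0∞ := fun i => gdist G w i.1 i.2 + 4 * maxEdge G w (π i.1 i.2)
  obtain ⟨H, hHG, hcard, hspan⟩ := exists_spanner_of_rounds (D := D) (a := 2 / 7) (by norm_num)
    (by positivity) (fun Q hQ => exists_round_subgraph_rpow hw hπ hQ fun _ => le_rfl)
    P.toFinite.toFinset
  refine ⟨H, hHG, ?_, fun s t hst => hspan (s, t) (P.toFinite.mem_toFinset.2 hst)⟩
  rwa [← Set.ncard_eq_toFinset_card P, mul_div_right_comm] at hcard
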